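/- The function F(x) = arcsl(x)/(x·Φ(x⁴, 3/2, 1/4)) is strictly increasing on the open interval (0, 1). -/

import Mathlib

/-- The arc lemniscate sine function: `arcsl x = ∫₀ˣ dt / √(1 - t⁴)`. -/
noncomputable def arcsl (x : ℝ) : ℝ := ∫ t in (0:ℝ)..x, 1 / Real.sqrt (1 - t ^ 4)

/-- The Lerch zeta function: `Φ(z, s, a) = ∑ₖ zᵏ / (k + a)ˢ`. -/
noncomputable def lerchPhi (z s a : ℝ) : ℝ := ∑' k : ℕ, z ^ k / ((k : ℝ) + a) ^ s

/-!
As power series in `u = x ^ 4`, both `arcsl x / x` and `Φ(u, s, a)` have positive coefficients, and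
for `0 < a ≤ 1 / 4`, `3 / 2 ≤ s` the quotient of their `n`-th coefficients increases with `n`. So it
suffices that a quotient of two such series is increasing in `u` (Biernacki and Krzyż), which is
Chebyshev's sum inequality: raising `u` shifts the weights `bₙ uⁿ` towards large `n`, where the
coefficient quotient is larger.
-/

open Set

section SeriesQuotient

theorem mul_lt_mul_of_hasSum_of_strictMono {ι : Type*} [LinearOrder ι] [Nontrivial ι]
    {r u v : ι → ℝ} {A B A' B' : ℝ} (hr : StrictMono r)
    (huv : ∀ m n, m < n → u n * v m < u m * v n)
    (hA : HasSum (fun n => r n * u n) A) (hB : HasSum u B)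
    (hA' : HasSum (fun n => r n * v n) A') (hB' : HasSum v B') :
    A * B' < A' * B := by
  have hdiff : HasSum (fun p : ι × ι => r p.1 * v p.1 * u p.2 - r p.1 * u p.1 * v p.2)
      (A' * B - A * B') :=
    (hA'.mul hB (summable_mul_of_summable_norm hA'.summable.norm hB.summable.norm)).sub
      (hA.mul hB' (summable_mul_of_summable_norm hA.summable.norm hB'.summable.norm))
  -- Adding the same sum with the two indices exchanged makes every term nonnegative.
  have hsymm : HasSum (fun p : ι × ι => (r p.2 - r p.1) * (u p.1 * v p.2 - u p.2 * v p.1))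
      (A' * B - A * B' + (A' * B - A * B')) := by
    refine (hdiff.add ((Equiv.prodComm ι ι).hasSum_iff.2 hdiff)).congr_fun fun p => ?_
    simp only [Function.comp_apply, Equiv.prodComm_apply, Prod.fst_swap, Prod.snd_swap]
    ring
  have hpos : ∀ m n, m < n → 0 < (r n - r m) * (u m * v n - u n * v m) := fun m n hmn =>
    mul_pos (sub_pos.2 (hr hmn)) (sub_pos.2 (huv m n hmn))
  have hnonneg : ∀ m n, 0 ≤ (r n - r m) * (u m * v n - u n * v m) := fun m n => by
    rcases lt_trichotomy m n with h | rfl | h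
    · exact (hpos m n h).le
    · simp
    · linarith [hpos n m h]
  obtain ⟨i, j, hij⟩ := exists_pair_lt ι
  have hsum_pos := hasSum_lt (i := (i, j)) (fun p => hnonneg p.1 p.2) (hpos i j hij) hasSum_zero
    hsymm
  linarith

theorem pow_mul_pow_lt_pow_mul_pow {R : Type*} [CommSemiring R] [PartialOrder R]
    [IsStrictOrderedRing R] {y z : R} (hy : 0 < y) (hyz : y < z) {m n : ℕ}
    (hmn : m < n) : y ^ n * z ^ m < y ^ m * z ^ n := by
  have hz : 0 < z := hy.trans hyz
  obtain ⟨k, rfl⟩ := Nat.exists_eq_add_of_lt hmn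
  calc y ^ (m + k + 1) * z ^ m = y ^ m * z ^ m * y ^ (k + 1) := by ring
    _ < y ^ m * z ^ m * z ^ (k + 1) := by gcongr
    _ = y ^ m * z ^ (m + k + 1) := by ring

theorem div_lt_div_of_hasSum_of_strictMono_div {a b : ℕ → ℝ} {y z A B A' B' : ℝ}
    (hb : ∀ n, 0 < b n) (hab : StrictMono fun n => a n / b n) (hy : 0 < y) (hyz : y < z)
    (hA : HasSum (fun n => a n * y ^ n) A) (hB : HasSum (fun n => b n * y ^ n) B)
    (hA' : HasSum (fun n => a n * z ^ n) A') (hB' : HasSum (fun n => b n * z ^ n) B') :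
    A / B < A' / B' := by
  have sum_pos {w C : ℝ} (hw : 0 < w) (hC : HasSum (fun n => b n * w ^ n) C) : 0 < C :=
    have term_pos (n : ℕ) : 0 < b n * w ^ n := mul_pos (hb n) (pow_pos hw n)
    hasSum_lt (fun n => (term_pos n).le) (term_pos 0) hasSum_zero hC
  have factor (w : ℝ) (n : ℕ) : a n * w ^ n = a n / b n * (b n * w ^ n) := by
    rw [← mul_assoc, div_mul_cancel₀ _ (hb n).ne']
  rw [div_lt_div_iff₀ (sum_pos hy hB) (sum_pos (hy.trans hyz) hB')]
  simp only [factor] at hA hA'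
  refine mul_lt_mul_of_hasSum_of_strictMono hab (fun m n hmn => ?_) hA hB hA' hB'
  calc b n * y ^ n * (b m * z ^ m) = b m * b n * (y ^ n * z ^ m) := by ring
    _ < b m * b n * (y ^ m * z ^ n) :=
      mul_lt_mul_of_pos_left (pow_mul_pow_lt_pow_mul_pow hy hyz hmn) (mul_pos (hb m) (hb n))
    _ = b m * y ^ m * (b n * z ^ n) := by ring

end SeriesQuotient

section BinomialSeries

theorem succ_mul_multichoose_succ {R : Type*} [CommRing R] [BinomialRing R] (r : R) (n : ℕ) :
    (n + 1) * Ring.multichoose r (n + 1) = (r + n) * Ring.multichoose r n := by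
  have hn := Ring.factorial_nsmul_multichoose_eq_ascPochhammer r n
  have hsucc := Ring.factorial_nsmul_multichoose_eq_ascPochhammer r (n + 1)
  rw [ascPochhammer_succ_right, Polynomial.smeval_mul, ← hn] at hsucc
  simp only [nsmul_eq_mul, Nat.factorial_succ, Nat.cast_mul, Nat.cast_succ, Polynomial.smeval_add,
    Polynomial.smeval_X, Polynomial.smeval_natCast, pow_one, pow_zero, mul_one] at hsucc
  have := BinomialRing.toIsAddTorsionFree (R := R)
  refine nsmul_right_injective n.factorial_ne_zero ?_
  simp only [nsmul_eq_mul]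
  linear_combination hsucc

theorem multichoose_pos {R : Type*} [CommRing R] [LinearOrder R] [IsStrictOrderedRing R]
    [BinomialRing R] {r : R} (hr : 0 < r) (n : ℕ) : 0 < Ring.multichoose r n := by
  induction n with
  | zero => simp
  | succ n ih =>
    have hprod : 0 < (n + 1) * Ring.multichoose r (n + 1) := by
      rw [succ_mul_multichoose_succ]; positivity
    exact pos_of_mul_pos_right hprod (by positivity)

theorem hasSum_multichoose_mul_pow (r : ℝ) {u : ℝ} (hu : |u| < 1) :
    HasSum (fun n => Ring.multichoose r n * u ^ n) (1 / (1 - u) ^ r) := by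
  have hmem : u ∈ Metric.eball (0 : ℝ) 1 := by
    rw [← ENNReal.ofReal_one, Metric.eball_ofReal]
    simpa using hu
  simpa [Ring.multichoose_eq, FormalMultilinearSeries.ofScalars, mul_comm] using
    (Real.one_div_one_sub_rpow_hasFPowerSeriesOnBall_zero r).hasSum hmem

/-- `1 / 4` is the largest shift for which this holds. -/
theorem strictMono_multichoose_half_mul_sqrt :
    StrictMono fun n : ℕ => Ring.multichoose (1 / 2 : ℝ) n * √(n + 1 / 4) := by
  refine strictMono_nat_of_lt_succ fun n => ?_
  have hc : 0 < Ring.multichoose (1 / 2 : ℝ) n := multichoose_pos one_half_pos n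
  have hc' : 0 < Ring.multichoose (1 / 2 : ℝ) (n + 1) := multichoose_pos one_half_pos _
  have hsucc : Ring.multichoose (1 / 2 : ℝ) (n + 1) =
      Ring.multichoose (1 / 2 : ℝ) n * ((1 / 2 + n) / (n + 1)) := by
    rw [mul_div_assoc', eq_div_iff (by positivity)]
    linear_combination succ_mul_multichoose_succ (1 / 2 : ℝ) n
  have hquot : (n : ℝ) + 1 / 4 < ((1 / 2 + n) / (n + 1)) ^ 2 * ((n + 1 : ℕ) + 1 / 4) := by
    rw [div_pow, div_mul_eq_mul_div, lt_div_iff₀ (by positivity)]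
    push_cast
    linarith
  refine lt_of_pow_lt_pow_left₀ 2 (by positivity) ?_
  rw [mul_pow, mul_pow, Real.sq_sqrt (by positivity), Real.sq_sqrt (by positivity), hsucc, mul_pow,
    mul_assoc]
  exact mul_lt_mul_of_pos_left hquot (by positivity)

end BinomialSeries

section Expansions

theorem hasSum_one_div_sqrt_one_sub_pow_four {t : ℝ} (ht : |t| < 1) :
    HasSum (fun n => Ring.multichoose (1 / 2 : ℝ) n * (t ^ 4) ^ n) (1 / √(1 - t ^ 4)) := by
  rw [Real.sqrt_eq_rpow]
  refine hasSum_multichoose_mul_pow _ ?_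
  rw [abs_pow]
  exact pow_lt_one₀ (abs_nonneg t) ht four_ne_zero

theorem hasSum_arcsl {x : ℝ} (hx : |x| < 1) :
    HasSum (fun n : ℕ => Ring.multichoose (1 / 2 : ℝ) n * (x ^ (4 * n + 1) / (4 * n + 1)))
      (arcsl x) := by
  have habs {t : ℝ} (ht : t ∈ uIoc 0 x) : |t| ≤ |x| := by
    simpa using abs_sub_left_of_mem_uIcc (uIoc_subset_uIcc ht)
  have hint : HasSum (fun n : ℕ => ∫ t in (0 : ℝ)..x, Ring.multichoose (1 / 2 : ℝ) n * (t ^ 4) ^ n)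
      (arcsl x) := by
    refine intervalIntegral.hasSum_integral_of_dominated_convergence
      (fun n _ => Ring.multichoose (1 / 2 : ℝ) n * (|x| ^ 4) ^ n) (fun n => ?_) (fun n => ?_) ?_
      intervalIntegrable_const ?_
    · exact Continuous.aestronglyMeasurable (by fun_prop)
    · filter_upwards with t ht
      have hc := multichoose_pos (one_half_pos (α := ℝ)) n
      rw [norm_mul, norm_pow, norm_pow, Real.norm_of_nonneg hc.le, Real.norm_eq_abs]
      have := habs ht
      gcongr
    · filter_upwards with t _
      exact (hasSum_one_div_sqrt_one_sub_pow_four (by rwa [abs_abs])).summable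
    · filter_upwards with t ht
      exact hasSum_one_div_sqrt_one_sub_pow_four ((habs ht).trans_lt hx)
  simpa [← pow_mul] using hint

theorem hasSum_arcsl_div_self {x : ℝ} (hx₀ : x ≠ 0) (hx : |x| < 1) :
    HasSum (fun n : ℕ => Ring.multichoose (1 / 2 : ℝ) n / (4 * n + 1) * (x ^ 4) ^ n)
      (arcsl x / x) := by
  refine ((hasSum_arcsl hx).div_const x).congr_fun fun n => ?_
  rw [pow_succ x (4 * n), pow_mul]
  field_simp

theorem hasSum_lerchPhi {z s a : ℝ} (hz : |z| < 1) (hs : 0 ≤ s) (ha : 0 < a) :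
    HasSum (fun k : ℕ => 1 / ((k : ℝ) + a) ^ s * z ^ k) (lerchPhi z s a) := by
  have hsummable : Summable fun k : ℕ => z ^ k / ((k : ℝ) + a) ^ s := by
    refine .of_norm_bounded ((summable_geometric_of_lt_one (abs_nonneg z) hz).div_const (a ^ s))
      fun k => ?_
    rw [norm_div, norm_pow, Real.norm_eq_abs, Real.norm_of_nonneg (by positivity)]
    gcongr
    exact le_add_of_nonneg_left k.cast_nonneg
  simpa only [one_div_mul_eq_div, lerchPhi] using hsummable.hasSum

end Expansions

section CoefficientQuotient

theorem monotoneOn_add_rpow_div_add_rpow {s t a b : ℝ} (ht : 0 ≤ t) (hts : t ≤ s) (ha : 0 < a)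
    (hab : a ≤ b) :
    MonotoneOn (fun x : ℝ => (x + a) ^ s / (x + b) ^ t) (Ici 0) := by
  intro x (hx : 0 ≤ x) y (hy : 0 ≤ y) hxy
  have hb : 0 < b := ha.trans_le hab
  have factor {w : ℝ} (hw : 0 ≤ w) :
      (w + a) ^ s / (w + b) ^ t = (w + a) ^ (s - t) * ((w + a) / (w + b)) ^ t := by
    rw [Real.div_rpow (by positivity) (by positivity), mul_div_assoc',
      ← Real.rpow_add (by positivity), sub_add_cancel]
  have hbase : (x + a) / (x + b) ≤ (y + a) / (y + b) := by
    rw [div_le_div_iff₀ (by positivity) (by positivity)]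
    nlinarith
  simp only [factor hx, factor hy]
  have := sub_nonneg.2 hts
  gcongr

theorem strictMono_arcsl_coeff_div_lerchPhi_coeff {s a : ℝ} (hs : 3 / 2 ≤ s) (ha₀ : 0 < a)
    (ha : a ≤ 1 / 4) :
    StrictMono fun n : ℕ =>
      Ring.multichoose (1 / 2 : ℝ) n / (4 * n + 1) / (1 / ((n : ℝ) + a) ^ s) := by
  have factor (n : ℕ) : Ring.multichoose (1 / 2 : ℝ) n / (4 * n + 1) / (1 / ((n : ℝ) + a) ^ s) =
      Ring.multichoose (1 / 2 : ℝ) n * √(n + 1 / 4) *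
        (((n : ℝ) + a) ^ s / (n + 1 / 4) ^ (3 / 2 : ℝ)) / 4 := by
    have hrpow : ((n : ℝ) + 1 / 4) ^ (3 / 2 : ℝ) = (n + 1 / 4) * √(n + 1 / 4) := by
      rw [Real.sqrt_eq_rpow, ← Real.rpow_one_add' (by positivity) (by norm_num)]
      norm_num
    have : √((n : ℝ) + 1 / 4) ≠ 0 := by positivity
    rw [hrpow]
    field_simp
  intro m n hmn
  have hc : 0 < Ring.multichoose (1 / 2 : ℝ) n := multichoose_pos one_half_pos n
  have hpow := monotoneOn_add_rpow_div_add_rpow (by norm_num) hs ha₀ ha (mem_Ici.2 m.cast_nonneg)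
    (mem_Ici.2 n.cast_nonneg) (Nat.cast_le.2 hmn.le)
  simp only [factor]
  gcongr ?_ / 4
  exact mul_lt_mul (strictMono_multichoose_half_mul_sqrt hmn) hpow (by positivity) (by positivity)

end CoefficientQuotient

theorem strictMonoOn_ratio_general {s a : ℝ} (hs : 3 / 2 ≤ s) (ha₀ : 0 < a) (ha : a ≤ 1 / 4) :
    StrictMonoOn (fun x : ℝ => arcsl x / (x * lerchPhi (x ^ 4) s a)) (Ioo 0 1) := by
  have harcsl {x : ℝ} (hx : x ∈ Ioo (0 : ℝ) 1) :=
    hasSum_arcsl_div_self hx.1.ne' (abs_lt.2 ⟨by linarith [hx.1], hx.2⟩)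
  have hlerch {x : ℝ} (hx : x ∈ Ioo (0 : ℝ) 1) :=
    hasSum_lerchPhi (z := x ^ 4) (s := s)
      (by rw [abs_of_pos (pow_pos hx.1 4)]; exact pow_lt_one₀ hx.1.le hx.2 four_ne_zero)
      (by linarith) ha₀
  intro x hx y hy hxy
  simp only [← div_div]
  exact div_lt_div_of_hasSum_of_strictMono_div (fun n => by positivity)
    (strictMono_arcsl_coeff_div_lerchPhi_coeff hs ha₀ ha) (pow_pos hx.1 4)
    (pow_lt_pow_left₀ hxy hx.1.le four_ne_zero) (harcsl hx) (hlerch hx) (harcsl hy) (hlerch hy)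

theorem strictMonoOn_ratio :
    StrictMonoOn (fun x : ℝ => arcsl x / (x * lerchPhi (x ^ 4) (3 / 2) (1 / 4)))
      (Set.Ioo (0 : ℝ) 1) :=
  strictMonoOn_ratio_general le_rfl (by norm_num) le_rfl
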